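/- arXiv:math/0403291 — 3 statements merged into one kernel-verified Lean document; each statement's English description precedes it below -/
import Mathlib

section
/- The following statements are equivalent for an integral domain R: (1) R is a t#-domain; (2) for each N ∈ t-Max(R), ⋂_{M ∈ t-Max(R) \ {N}} R_M is not contained in R_N; (3) for each N ∈ t-Max(R), R ≠ ⋂_{M ∈ t-Max(R) \ {N}} R_M; (4) ⋂_{M ∈ M₁} R_M and ⋂_{M ∈ M₂} R_M are incomparable (under inclusion) for each pair of disjoint nonempty subsets M₁ and M₂ of t-Max(R); (5) for each maximal t-ideal M of R, there is a divisorial integral ideal of R which is contained in M and in no other maximal t-ideal of R; (6) for each maximal t-ideal M of R, there is an element u ∈ K \ R such that M is the only maximal t-ideal containing (R :_R u) = {r ∈ R : ru ∈ R}. -/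
/-!
Everything rests on the fact that `x ∈ R_P` exactly when the conductor `(R :_R x)` is not contained
in `P` (`mem_locSet_iff`). Thus (2) and (6) say the same thing: an element lying in every `R_M`,
`M ≠ N`, but not in `R_N` is an element whose conductor lies in `N` and in no other maximal
`t`-ideal. The equivalence of (1), (2) and (4) is monotonicity of intersections, the extreme case
being `t-Max(R) \ {N}` against `t-Max(R)`; if `t-Max(R) = {N}`, one also needs `R_N ≠ K`, which
holds because `N` is nonzero and proper.

The remaining implications use that conductors are divisorial (`isDivisorialIdeal_colonIdeal`), that
divisorial ideals are `t`-ideals, and that by Zorn's lemma every proper `t`-ideal lies in a maximal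
one (`exists_le_tMax`). These give `R = ⋂ R_M`, hence (3) ⇒ (2). For (5) ⇒ (6), a proper divisorial
ideal `I` is the intersection of the conductors `(R :_R u)`, `u ∈ I⁻¹`, one of which is proper; it
lies in some maximal `t`-ideal, and every maximal `t`-ideal containing it contains `I`.
-/

/-
Definitions following S. Gabelli, E. Houston, T. G. Lucas,
"The t#-property for integral domains".

All the star-operation notions (`v`, `t`, maximal `t`-ideals, etc.) are defined for a
commutative ring `R` via its total quotient field `FractionRing R`; in all theorems `R`
is assumed to be an integral domain, so `FractionRing R` is its quotient field `K`.
-/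

noncomputable section

namespace TSharpPaper

variable (R : Type*) [CommRing R]

/-- The image of an integral ideal in the quotient field, as an `R`-submodule. -/
def idealSub (I : Ideal R) : Submodule R (FractionRing R) :=
  Submodule.map (Algebra.linearMap R (FractionRing R)) I

/-- The divisorial closure `I_v = (I⁻¹)⁻¹` of an integral ideal, as an integral ideal.
Here for a submodule `J` of `K`, `1 / J = {x ∈ K : xJ ⊆ R}` is `J⁻¹`. -/
def vIdeal (I : Ideal R) : Ideal R :=
  Submodule.comap (Algebra.linearMap R (FractionRing R))
    ((1 : Submodule R (FractionRing R)) / (1 / idealSub R I))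

/-- The `t`-closure `I_t = ⋃ J_v`, the union over all nonzero finitely generated
subideals `J` of `I`. -/
def tIdeal (I : Ideal R) : Ideal R :=
  ⨆ (J : Ideal R) (_ : J.FG) (_ : J ≠ ⊥) (_ : J ≤ I), vIdeal R J

/-- A (nonzero) integral ideal is divisorial if `I = I_v`. -/
def IsDivisorialIdeal (I : Ideal R) : Prop := I ≠ ⊥ ∧ vIdeal R I = I

/-- A (nonzero) integral ideal is a `t`-ideal if `I = I_t`. -/
def IsTIdeal (I : Ideal R) : Prop := I ≠ ⊥ ∧ tIdeal R I = I

/-- A `t`-prime is a prime `t`-ideal. -/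
def IsTPrime (P : Ideal R) : Prop := P.IsPrime ∧ IsTIdeal R P

/-- The set `t-Max(R)` of maximal `t`-ideals: integral ideals maximal among proper
integral `t`-ideals. -/
def tMax : Set (Ideal R) :=
  {M | IsTIdeal R M ∧ M ≠ ⊤ ∧ ∀ J : Ideal R, IsTIdeal R J → J ≠ ⊤ → M ≤ J → J = M}

/-- The localization `R_P` of `R` at (the complement of) a prime `P`, viewed as a subset
of the quotient field. -/
def locSet (P : Ideal R) : Set (FractionRing R) :=
  {x | ∃ r s : R, s ∉ P ∧ x * algebraMap R (FractionRing R) s = algebraMap R (FractionRing R) r}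

/-- The image of `R` in its quotient field. -/
def imageR : Set (FractionRing R) := Set.range (algebraMap R (FractionRing R))

/-- `R` is a `t#`-domain if `⋂_{M ∈ 𝔐₁} R_M ≠ ⋂_{M ∈ 𝔐₂} R_M` for any two distinct
subsets `𝔐₁, 𝔐₂` of `t-Max(R)`. -/
def IsTSharp : Prop :=
  ∀ 𝔐₁ 𝔐₂ : Set (Ideal R), 𝔐₁ ⊆ tMax R → 𝔐₂ ⊆ tMax R → 𝔐₁ ≠ 𝔐₂ →
    (⋂ M ∈ 𝔐₁, locSet R M) ≠ ⋂ M ∈ 𝔐₂, locSet R M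

/-- The conductor `(R :_R u) = {r ∈ R : r·u ∈ R}` of an element `u` of the quotient
field. -/
def colonIdeal (u : FractionRing R) : Ideal R :=
  Submodule.comap (Algebra.linearMap R (FractionRing R))
    (Submodule.comap (LinearMap.mulLeft R u) (1 : Submodule R (FractionRing R)))

/-- `R` is `v`-coherent if for each nonzero finitely generated ideal `I` of `R`,
`I⁻¹ = J_v` for some finitely generated fractional ideal `J`. -/
def IsVCoherent : Prop :=
  ∀ I : Ideal R, I ≠ ⊥ → I.FG →
    ∃ J : Submodule R (FractionRing R), J.FG ∧
      (1 : Submodule R (FractionRing R)) / idealSub R I = 1 / (1 / J)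

/-- An ideal is `v`-finite if it equals `J_v` for some finitely generated ideal `J`. -/
def IsVFinite (I : Ideal R) : Prop := ∃ J : Ideal R, J.FG ∧ I = vIdeal R J

/-- `Φ(Λ)`: the set of all integral `t`-ideals `I` of `R` with `I ⊄ P` for every
`P ∈ Λ`. -/
def Phi (Λ : Set (Ideal R)) : Set (Ideal R) :=
  {I | IsTIdeal R I ∧ ∀ P ∈ Λ, ¬ I ≤ P}

/-- `Φ(Λ)` is `v`-finite if every `t`-ideal in `Φ(Λ)` contains a `v`-finite `t`-ideal
belonging to `Φ(Λ)`. -/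
def PhiVFinite (Λ : Set (Ideal R)) : Prop :=
  ∀ I ∈ Phi R Λ, ∃ J ∈ Phi R Λ, J ≤ I ∧ IsVFinite R J

/-- The generalized ring of quotients `R_{Φ(Λ)} = {x ∈ K : xI ⊆ R for some I ∈ Φ(Λ)}`. -/
def RPhi (Λ : Set (Ideal R)) : Set (FractionRing R) :=
  {x | ∃ I ∈ Phi R Λ, ∀ a ∈ I, x * algebraMap R (FractionRing R) a ∈ imageR R}

/-- `Λ` is a set of pairwise incomparable `t`-primes of `R`. -/
def IncompTPrimes (Λ : Set (Ideal R)) : Prop :=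
  (∀ P ∈ Λ, IsTPrime R P) ∧ ∀ P ∈ Λ, ∀ Q ∈ Λ, P ≤ Q → P = Q

/-- `R` is a Prüfer `v`-multiplication domain if `R_M` is a valuation domain for every
maximal `t`-ideal `M` of `R`. -/
def IsPVMD [IsDomain R] : Prop :=
  ∀ M ∈ tMax R, ∀ x : FractionRing R, x ≠ 0 → x ∈ locSet R M ∨ x⁻¹ ∈ locSet R M

/-- `R` is a Mori domain: the ascending chain condition holds on integral divisorial
ideals. -/
def IsMori : Prop :=
  ∀ f : ℕ → Ideal R, (∀ n, IsDivisorialIdeal R (f n)) → (∀ n, f n ≤ f (n + 1)) →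
    ∃ n, ∀ m, n ≤ m → f m = f n

/-- The localization `T_Q` of a subring `T` of the quotient field of `R` at (the
complement of) an ideal `Q` of `T`, viewed as a subset of the quotient field of `R`. -/
def locSetSub (T : Subring (FractionRing R)) (Q : Ideal T) : Set (FractionRing R) :=
  {x | ∃ r s : T, s ∉ Q ∧ x * (s : FractionRing R) = (r : FractionRing R)}

/-- `T` is an overring of `R`: a subring of the quotient field containing (the image
of) `R`. -/
def IsOverring (T : Subring (FractionRing R)) : Prop :=
  ∀ r : R, algebraMap R (FractionRing R) r ∈ T

/-- The canonical ring homomorphism from `R` to an overring `T`; `M ∩ R` is the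
contraction `Ideal.comap (intoOverring R T h) M`. -/
def intoOverring (T : Subring (FractionRing R)) (h : IsOverring R T) : R →+* T :=
  (algebraMap R (FractionRing R)).codRestrict T h

/-- `T` is a `t`-flat overring of `R`: `T_M = R_{M ∩ R}` for each maximal `t`-ideal `M`
of `T`. -/
def IsTFlat (T : Subring (FractionRing R)) : Prop :=
  ∃ h : IsOverring R T, ∀ M ∈ tMax (↥T),
    locSetSub R T M = locSet R (Ideal.comap (intoOverring R T h) M)

/-- `T` is `t`-linked over `R`: for each nonzero finitely generated ideal `I` of `R` with
`(R : I) = R` one has `(T : IT) = T`. -/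
def IsTLinked (T : Subring (FractionRing R)) : Prop :=
  ∀ I : Ideal R, I ≠ ⊥ → I.FG →
    (1 : Submodule R (FractionRing R)) / idealSub R I = 1 →
    {x : FractionRing R | ∀ a ∈ I, x * algebraMap R (FractionRing R) a ∈ T} =
      (T : Set (FractionRing R))

/-- `T` is a `t`-subintersection of `R`: `T = ⋂_{P ∈ Λ} R_P` for some set `Λ` of
`t`-primes of `R`. -/
def IsTSubintersection (T : Subring (FractionRing R)) : Prop :=
  ∃ Λ : Set (Ideal R), (∀ P ∈ Λ, IsTPrime R P) ∧
    (T : Set (FractionRing R)) = ⋂ P ∈ Λ, locSet R P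

/-- `(P : P) = {x ∈ K : xP ⊆ P}`, as a subring of the quotient field of `R`. -/
def colonPP (P : Ideal R) : Subring (FractionRing R) where
  carrier := {x | ∀ a ∈ P, x * algebraMap R (FractionRing R) a ∈ idealSub R P}
  one_mem' := by
    intro a ha
    rw [one_mul]
    exact Submodule.mem_map_of_mem ha
  mul_mem' := by
    intro x y hx hy a ha
    rcases hy a ha with ⟨b, hb, hby⟩
    rw [mul_assoc, ← hby]
    exact hx b hb
  add_mem' := by
    intro x y hx hy a ha
    rw [add_mul]
    exact Submodule.add_mem _ (hx a ha) (hy a ha)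
  zero_mem' := by
    intro a ha
    rw [zero_mul]
    exact Submodule.zero_mem _
  neg_mem' := by
    intro x hx a ha
    rw [neg_mul]
    exact Submodule.neg_mem _ (hx a ha)

/-- `R` is a `t#_P`-domain: for sets `Λ₁ ≠ Λ₂` of `t`-primes such that `(P + Q)_t = R`
for distinct `P ∈ Λ₁`, `Q ∈ Λ₂`, one has `R_{Φ(Λ₁)} ≠ R_{Φ(Λ₂)}`. -/
def IsTSharpP : Prop :=
  ∀ Λ₁ Λ₂ : Set (Ideal R), (∀ P ∈ Λ₁, IsTPrime R P) → (∀ Q ∈ Λ₂, IsTPrime R Q) →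
    (∀ P ∈ Λ₁, ∀ Q ∈ Λ₂, P ≠ Q → tIdeal R (P ⊔ Q) = ⊤) →
    Λ₁ ≠ Λ₂ → RPhi R Λ₁ ≠ RPhi R Λ₂

/-- A `t`-localizing system of ideals of `R`: a set of integral `t`-ideals closed under
`t`-multiplication and satisfying the two localizing-system closure properties. -/
def IsTLocalizingSystem (Φ : Set (Ideal R)) : Prop :=
  (∀ I ∈ Φ, IsTIdeal R I) ∧
  (∀ I ∈ Φ, ∀ J ∈ Φ, tIdeal R (I * J) ∈ Φ) ∧
  (∀ I ∈ Φ, ∀ J : Ideal R, IsTIdeal R J → I ≤ J → J ∈ Φ) ∧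
  (∀ I ∈ Φ, ∀ J : Ideal R, IsTIdeal R J →
    (∀ a ∈ I, tIdeal R (Submodule.colon J (Ideal.span {a})) ∈ Φ) → J ∈ Φ)

/-- The ascending chain condition on `t`-primes of `R`. -/
def ACCTPrimes : Prop :=
  ∀ f : ℕ → Ideal R, (∀ n, IsTPrime R (f n)) → (∀ n, f n ≤ f (n + 1)) →
    ∃ n, ∀ m, n ≤ m → f m = f n

/-- The ascending chain condition on radical `t`-ideals of `R`. -/
def ACCRadicalTIdeals : Prop :=
  ∀ f : ℕ → Ideal R, (∀ n, IsTIdeal R (f n) ∧ (f n).radical = f n) →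
    (∀ n, f n ≤ f (n + 1)) → ∃ n, ∀ m, n ≤ m → f m = f n

/-- A prime `P` is branched if there is a `PR_P`-primary ideal of `R_P` different from
`PR_P` (the maximal ideal of `R_P`). -/
def IsBranched (P : Ideal R) (hP : P.IsPrime) : Prop :=
  letI := hP
  ∃ Q : Ideal (Localization.AtPrime P), Q.IsPrimary ∧
    Q ≠ IsLocalRing.maximalIdeal (Localization.AtPrime P)

/-- A prime ideal of a domain has height one. -/
def HeightOne (Q : Ideal R) : Prop :=
  Q ≠ ⊥ ∧ ∀ P : Ideal R, P.IsPrime → P < Q → P = ⊥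

/-- A nonzero integral ideal `I` is `t`-invertible: `(I I⁻¹)_t = R`. -/
def IsTInvertible (I : Ideal R) : Prop :=
  tIdeal R (Submodule.comap (Algebra.linearMap R (FractionRing R))
    (idealSub R I * ((1 : Submodule R (FractionRing R)) / idealSub R I))) = ⊤

variable {σ : Type*}

/-- An upper to zero: a prime ideal `Q` of `R[{X_α}]` with `Q ∩ R = 0`. -/
def IsUpperToZero (Q : Ideal (MvPolynomial σ R)) : Prop :=
  Q.IsPrime ∧ Ideal.comap (MvPolynomial.C : R →+* MvPolynomial σ R) Q = ⊥

/-- The content `c(f)` of a polynomial: the ideal of `R` generated by its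
coefficients. -/
def mvContent (f : MvPolynomial σ R) : Ideal R :=
  Ideal.span (Set.range fun m => MvPolynomial.coeff m f)

/-- The content `c(I)` of an ideal of `R[{X_α}]`: the ideal of `R` generated by the
coefficients of all polynomials in `I`. -/
def mvContentIdeal (Q : Ideal (MvPolynomial σ R)) : Ideal R :=
  Ideal.span {r | ∃ f ∈ Q, ∃ m, MvPolynomial.coeff m f = r}

/-- `R({X_α})`: the localization of `R[{X_α}]` at the (multiplicatively closed) set of
polynomials of unit content. -/
def mvNagata (σ : Type*) : Type _ :=
  Localization (Submonoid.closure {f : MvPolynomial σ R | mvContent R f = ⊤})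

instance (σ : Type*) : CommRing (mvNagata R σ) := by
  unfold mvNagata; infer_instance

/-- `R⟨{X_α}⟩`: the localization of `R[{X_α}]` at the (multiplicatively closed) set
`S = {f : c(f)_v = R}`. -/
def mvKronecker (σ : Type*) : Type _ :=
  Localization (Submonoid.closure {f : MvPolynomial σ R | vIdeal R (mvContent R f) = ⊤})

instance (σ : Type*) : CommRing (mvKronecker R σ) := by
  unfold mvKronecker; infer_instance

section Helpers

variable {R}

theorem mem_colonIdeal {u : FractionRing R} {r : R} :
    r ∈ colonIdeal R u ↔ u * algebraMap R (FractionRing R) r ∈ imageR R := by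
  simp [colonIdeal, imageR, Submodule.mem_one]

/-- `r ∈ I_v` if and only if `r I⁻¹ ⊆ R`; equivalently, `I_v` is the intersection of the conductors
`(R :_R u)` for `u ∈ I⁻¹`. -/
theorem mem_vIdeal {I : Ideal R} {r : R} :
    r ∈ vIdeal R I ↔ ∀ u : FractionRing R, I ≤ colonIdeal R u → r ∈ colonIdeal R u := by
  have key : ∀ u : FractionRing R,
      u ∈ (1 : Submodule R (FractionRing R)) / idealSub R I ↔ I ≤ colonIdeal R u := by
    intro u
    rw [Submodule.mem_div_iff_forall_mul_mem]
    constructor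
    · intro h a ha
      exact h _ (Submodule.mem_map_of_mem ha)
    · rintro h _ ⟨a, ha, rfl⟩
      exact h ha
  change algebraMap R (FractionRing R) r ∈
    (1 : Submodule R (FractionRing R)) / (1 / idealSub R I) ↔ _
  rw [Submodule.mem_div_iff_forall_mul_mem]
  refine forall_congr' fun u => ?_
  rw [key, mul_comm]
  rfl

theorem le_vIdeal (I : Ideal R) : I ≤ vIdeal R I :=
  fun _ ha => mem_vIdeal.2 fun _ hu => hu ha

theorem vIdeal_mono {I J : Ideal R} (h : I ≤ J) : vIdeal R I ≤ vIdeal R J :=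
  fun _ hr => mem_vIdeal.2 fun u hu => mem_vIdeal.1 hr u (h.trans hu)

theorem le_tIdeal (I : Ideal R) : I ≤ tIdeal R I := by
  intro a ha
  -- The zero ideal is excluded from the supremum defining `I_t`.
  by_cases h0 : a = 0
  · rw [h0]; exact zero_mem _
  have hle : vIdeal R (Ideal.span {a}) ≤ tIdeal R I :=
    le_iSup_of_le (Ideal.span {a}) <| le_iSup_of_le ⟨{a}, by simp⟩ <|
      le_iSup_of_le (by simpa [Ideal.span_singleton_eq_bot] using h0) <|
      le_iSup_of_le (by simpa [Ideal.span_le] using ha) le_rfl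
  exact hle (le_vIdeal _ (Ideal.mem_span_singleton_self a))

theorem IsTIdeal.vIdeal_le {I J : Ideal R} (hI : IsTIdeal R I) (hJ : J.FG) (h0 : J ≠ ⊥)
    (hJI : J ≤ I) : vIdeal R J ≤ I := by
  conv_rhs => rw [← hI.2]
  exact le_iSup_of_le J <| le_iSup_of_le hJ <| le_iSup_of_le h0 <| le_iSup_of_le hJI le_rfl

theorem isTIdeal_of_forall {I : Ideal R} (hI : I ≠ ⊥)
    (h : ∀ J : Ideal R, J.FG → J ≠ ⊥ → J ≤ I → vIdeal R J ≤ I) : IsTIdeal R I :=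
  ⟨hI, le_antisymm (iSup_le fun J => iSup_le fun hJ => iSup_le fun h0 => iSup_le fun hJI =>
    h J hJ h0 hJI) (le_tIdeal I)⟩

theorem IsDivisorialIdeal.isTIdeal {I : Ideal R} (h : IsDivisorialIdeal R I) : IsTIdeal R I :=
  isTIdeal_of_forall h.1 fun _ _ _ hJ => (vIdeal_mono hJ).trans h.2.le

theorem isDivisorialIdeal_colonIdeal [IsDomain R] (u : FractionRing R) :
    IsDivisorialIdeal R (colonIdeal R u) := by
  refine ⟨?_, le_antisymm (fun r hr => mem_vIdeal.1 hr u le_rfl) (le_vIdeal _)⟩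
  -- A denominator of `u` is a nonzero element of the conductor.
  obtain ⟨⟨a, b⟩, hab⟩ := IsLocalization.surj (nonZeroDivisors R) u
  intro hbot
  have hb : (b : R) ∈ colonIdeal R u := mem_colonIdeal.2 ⟨a, hab.symm⟩
  rw [hbot, Ideal.mem_bot] at hb
  exact nonZeroDivisors.coe_ne_zero b hb

theorem colonIdeal_eq_top_iff {u : FractionRing R} : colonIdeal R u = ⊤ ↔ u ∈ imageR R := by
  rw [Ideal.eq_top_iff_one, mem_colonIdeal, map_one, mul_one]

theorem mem_locSet_iff {P : Ideal R} {x : FractionRing R} :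
    x ∈ locSet R P ↔ ¬ colonIdeal R x ≤ P := by
  rw [SetLike.not_le_iff_exists]
  constructor
  · rintro ⟨r, s, hs, h⟩
    exact ⟨s, mem_colonIdeal.2 ⟨r, h.symm⟩, hs⟩
  · rintro ⟨s, hs, hsP⟩
    obtain ⟨r, hr⟩ := mem_colonIdeal.1 hs
    exact ⟨r, s, hsP, hr.symm⟩

/-- Zorn's lemma applies because the `t`-closure is determined by finitely generated subideals, so
that the union of a chain of proper `t`-ideals is a proper `t`-ideal. -/
theorem exists_le_tMax {I : Ideal R} (hI : IsTIdeal R I) (hI1 : I ≠ ⊤) :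
    ∃ M ∈ tMax R, I ≤ M := by
  obtain ⟨M, hIM, hM⟩ := zorn_le_nonempty₀ {J : Ideal R | IsTIdeal R J ∧ J ≠ ⊤} (by
    intro c hc hchain y hy
    have hdir := hchain.directedOn
    -- A finitely generated ideal below the union is below a member of the chain.
    have hfg : ∀ J : Ideal R, J.FG → J ≤ sSup c → ∃ L ∈ c, J ≤ L := fun J hJ hJc =>
      (Submodule.fg_iff_compact J).1 hJ c (sSup c) ⟨y, hy⟩ hdir (isLUB_sSup c) hJc
    refine ⟨sSup c, ⟨isTIdeal_of_forall ?_ ?_, ?_⟩, fun z hz => le_sSup hz⟩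
    · exact ne_bot_of_le_ne_bot (hc hy).1.1 (le_sSup hy)
    · intro J hJ h0 hJc
      obtain ⟨L, hL, hJL⟩ := hfg J hJ hJc
      exact ((hc hL).1.vIdeal_le hJ h0 hJL).trans (le_sSup hL)
    · intro htop
      obtain ⟨L, hL, hJL⟩ := hfg ⊤ ⟨{1}, by simp⟩ htop.ge
      exact (hc hL).2 (top_le_iff.1 hJL)) I ⟨hI, hI1⟩
  exact ⟨M, ⟨hM.prop.1, hM.prop.2, fun J hJ hJ1 hMJ => (hM.eq_of_le ⟨hJ, hJ1⟩ hMJ).symm⟩, hIM⟩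

theorem imageR_subset_locSet {P : Ideal R} (hP : P ≠ ⊤) : imageR R ⊆ locSet R P := by
  intro x hx
  rw [mem_locSet_iff, colonIdeal_eq_top_iff.2 hx, top_le_iff]
  exact hP

theorem mem_imageR_of_forall_mem_locSet [IsDomain R] {x : FractionRing R}
    (hx : ∀ M ∈ tMax R, x ∈ locSet R M) : x ∈ imageR R := by
  by_contra h
  obtain ⟨M, hM, hle⟩ := exists_le_tMax (isDivisorialIdeal_colonIdeal x).isTIdeal
    (mt colonIdeal_eq_top_iff.1 h)
  exact mem_locSet_iff.1 (hx M hM) hle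

theorem locSet_ne_univ [IsDomain R] {P : Ideal R} (hP : P ≠ ⊥) : locSet R P ≠ Set.univ := by
  obtain ⟨a, ha, h0⟩ := Submodule.exists_mem_ne_zero_of_ne_bot hP
  have h0' : algebraMap R (FractionRing R) a ≠ 0 := by simpa using h0
  intro h
  -- If `1 / a = r / s`, then `s = r * a ∈ P`.
  obtain ⟨r, s, hs, hrs⟩ : (algebraMap R (FractionRing R) a)⁻¹ ∈ locSet R P := h ▸ Set.mem_univ _
  refine hs ?_
  have : s = r * a := by
    apply IsFractionRing.injective R (FractionRing R)
    rw [map_mul, ← hrs]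
    field_simp
  rw [this]
  exact P.mul_mem_left r ha

/-- Under condition (2), if `N` belongs to `B` but not to `A`, then `⋂_{M ∈ A} R_M` is not
contained in `⋂_{M ∈ B} R_M`. -/
theorem not_iInter_subset
    (h : ∀ N ∈ tMax R, ¬ (⋂ M ∈ tMax R \ {N}, locSet R M) ⊆ locSet R N)
    {A B : Set (Ideal R)} (hA : A ⊆ tMax R) (hB : B ⊆ tMax R) {N : Ideal R} (hNB : N ∈ B)
    (hNA : N ∉ A) : ¬ (⋂ M ∈ A, locSet R M) ⊆ ⋂ M ∈ B, locSet R M := by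
  intro hsub
  have hAN : A ⊆ tMax R \ {N} := fun M hM => ⟨hA hM, fun e => hNA (e ▸ hM)⟩
  exact h N (hB hNB) ((Set.biInter_subset_biInter_left hAN).trans
    (hsub.trans (Set.biInter_subset_of_mem hNB)))

end Helpers

/-- **Theorem (1.2).**  The following statements are equivalent for an integral domain `R`:
(1) `R` is a `t#`-domain;
(2) for each `N ∈ t-Max(R)`, `⋂_{M ∈ t-Max(R) \ {N}} R_M ⊄ R_N`;
(3) for each `N ∈ t-Max(R)`, `R ≠ ⋂_{M ∈ t-Max(R) \ {N}} R_M`;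
(4) `⋂_{M ∈ 𝔐₁} R_M` and `⋂_{M ∈ 𝔐₂} R_M` are incomparable for each pair of disjoint
    nonempty subsets `𝔐₁, 𝔐₂` of `t-Max(R)`;
(5) each maximal `t`-ideal `M` contains a divisorial ideal contained in no other maximal
    `t`-ideal;
(6) for each maximal `t`-ideal `M` there is `u ∈ K \ R` such that `M` is the only maximal
    `t`-ideal containing `(R :_R u)`. -/
theorem tsharp_characterization (R : Type*) [CommRing R] [IsDomain R] :
    List.TFAE
      [ IsTSharp R,
        ∀ N ∈ tMax R, ¬ (⋂ M ∈ tMax R \ {N}, locSet R M) ⊆ locSet R N,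
        ∀ N ∈ tMax R, imageR R ≠ ⋂ M ∈ tMax R \ {N}, locSet R M,
        ∀ 𝔐₁ 𝔐₂ : Set (Ideal R), 𝔐₁ ⊆ tMax R → 𝔐₂ ⊆ tMax R →
          𝔐₁.Nonempty → 𝔐₂.Nonempty → Disjoint 𝔐₁ 𝔐₂ →
          ¬ (⋂ M ∈ 𝔐₁, locSet R M) ⊆ (⋂ M ∈ 𝔐₂, locSet R M) ∧
          ¬ (⋂ M ∈ 𝔐₂, locSet R M) ⊆ (⋂ M ∈ 𝔐₁, locSet R M),
        ∀ M ∈ tMax R, ∃ I : Ideal R, IsDivisorialIdeal R I ∧ I ≤ M ∧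
          ∀ N ∈ tMax R, I ≤ N → N = M,
        ∀ M ∈ tMax R, ∃ u : FractionRing R, u ∉ imageR R ∧ colonIdeal R u ≤ M ∧
          ∀ N ∈ tMax R, colonIdeal R u ≤ N → N = M ] := by
  tfae_have 2 → 1 := by
    intro h A B hA hB hne heq
    obtain ⟨N, hN⟩ : ∃ N, ¬ (N ∈ A ↔ N ∈ B) := by
      by_contra! hall
      exact hne (Set.ext hall)
    by_cases hNA : N ∈ A
    · exact not_iInter_subset h hB hA hNA (by tauto) heq.ge
    · exact not_iInter_subset h hA hB (by tauto : N ∈ B) hNA heq.le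
  tfae_have 1 → 2 := by
    intro h N hN hsub
    refine h (tMax R \ {N}) (tMax R) Set.sdiff_subset le_rfl
      (fun e => (e.symm ▸ hN : N ∈ tMax R \ {N}).2 rfl) ?_
    refine Set.Subset.antisymm (fun x hx => Set.mem_iInter₂.2 fun M hM => ?_)
      (Set.biInter_subset_biInter_left Set.sdiff_subset)
    by_cases e : M = N
    · exact e ▸ hsub hx
    · exact Set.mem_iInter₂.1 hx M ⟨hM, e⟩
  tfae_have 2 → 3 := by
    intro h N hN heq
    exact h N hN (heq ▸ imageR_subset_locSet hN.2.1)
  tfae_have 3 → 2 := by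
    intro h N hN hsub
    refine h N hN (Set.Subset.antisymm
      (Set.subset_iInter₂ fun M hM => imageR_subset_locSet hM.1.2.1) fun x hx => ?_)
    refine mem_imageR_of_forall_mem_locSet fun M hM => ?_
    by_cases e : M = N
    · exact e ▸ hsub hx
    · exact Set.mem_iInter₂.1 hx M ⟨hM, e⟩
  tfae_have 2 → 4 := by
    intro h A B hA hB ⟨P, hP⟩ ⟨Q, hQ⟩ hd
    exact ⟨not_iInter_subset h hA hB hQ (Set.disjoint_right.1 hd hQ),
      not_iInter_subset h hB hA hP (Set.disjoint_left.1 hd hP)⟩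
  tfae_have 4 → 2 := by
    intro h N hN hsub
    rcases (tMax R \ {N}).eq_empty_or_nonempty with he | hne
    · -- Here the intersection is empty, so the inclusion reads `K ⊆ R_N`.
      rw [he, Set.biInter_empty] at hsub
      exact locSet_ne_univ hN.1.1 (Set.univ_subset_iff.1 hsub)
    · refine (h (tMax R \ {N}) {N} Set.sdiff_subset (Set.singleton_subset_iff.2 hN) hne
        (Set.singleton_nonempty N) Set.disjoint_sdiff_left).1 ?_
      rwa [Set.biInter_singleton]
  tfae_have 2 → 6 := by
    intro h N hN
    obtain ⟨u, hu, huN⟩ := Set.not_subset.1 (h N hN)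
    refine ⟨u, fun hR => huN (imageR_subset_locSet hN.2.1 hR),
      not_not.1 (mt mem_locSet_iff.2 huN), fun M hM hle => ?_⟩
    by_contra hne
    exact mem_locSet_iff.1 (Set.mem_iInter₂.1 hu M ⟨hM, hne⟩) hle
  tfae_have 6 → 2 := by
    intro h N hN hsub
    obtain ⟨u, -, huN, huniq⟩ := h N hN
    refine mem_locSet_iff.1 (hsub (Set.mem_iInter₂.2 fun M hM => ?_)) huN
    exact mem_locSet_iff.2 fun hle => hM.2 (huniq M hM.1 hle)
  tfae_have 6 → 5 := by
    intro h N hN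
    obtain ⟨u, -, huN, huniq⟩ := h N hN
    exact ⟨colonIdeal R u, isDivisorialIdeal_colonIdeal u, huN, huniq⟩
  tfae_have 5 → 6 := by
    intro h N hN
    obtain ⟨I, hI, hIN, huniq⟩ := h N hN
    have h1 : (1 : R) ∉ vIdeal R I := by
      rw [hI.2]
      exact fun h1 => hN.2.1 ((Ideal.eq_top_iff_one N).2 (hIN h1))
    -- Since `1 ∉ I_v`, some `u ∈ I⁻¹` is not in `R`.
    obtain ⟨u, hIu, hu⟩ : ∃ u : FractionRing R, I ≤ colonIdeal R u ∧ 1 ∉ colonIdeal R u := by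
      simpa [mem_vIdeal] using h1
    have hu' : colonIdeal R u ≠ ⊤ := mt (Ideal.eq_top_iff_one _).1 hu
    obtain ⟨M, hM, huM⟩ := exists_le_tMax (isDivisorialIdeal_colonIdeal u).isTIdeal hu'
    have hMN : M = N := huniq M hM (hIu.trans huM)
    exact ⟨u, mt colonIdeal_eq_top_iff.2 hu', hMN ▸ huM, fun P hP hle => huniq P hP (hIu.trans hle)⟩
  tfae_finish

end TSharpPaper
end
end

section
/- Let R be a v-coherent integral domain. Then R is a t#-domain if and only if each maximal t-ideal of R contains a finitely generated ideal which is contained in no other maximal t-ideal of R. -/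
/-!
The proof rests on conductors and inverses of finitely generated ideals.

If `R` is a `t#`-domain and `M` is a maximal `t`-ideal, there is `u = a/b` lying in `R_N` for all
maximal `t`-ideals `N ≠ M` but not in `R_M`. The conductor `I = (R :_R u)` is then contained in `M`
and in no other maximal `t`-ideal. Since `I = b (a, b)⁻¹` and `(a, b)⁻¹ = H_v` with `H` finitely
generated, `I = (bH)_v`, so the finitely generated ideal `bH` is contained in the same
maximal `t`-ideals as `I` (`exists_fg_of_mem_locSet`).

Conversely, let the nonzero finitely generated ideal `J` lie in `M` and in no other maximal
`t`-ideal. Then `J⁻¹ ⊆ R_N` for all `N ≠ M`. If also `J⁻¹ ⊆ R_M`, write `J⁻¹ = H_v` with `H` finitely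
generated; as `M` is prime, `H` has a common denominator `s ∉ M`, and `s ∈ H⁻¹ = J_v ⊆ M`, a
contradiction. So some element of `J⁻¹` separates `R_M` from the other localizations
(`exists_not_mem_locSet`), which gives the `t#`-property.
-/

/-
Definitions following S. Gabelli, E. Houston, T. G. Lucas,
"The t#-property for integral domains".

All the star-operation notions (`v`, `t`, maximal `t`-ideals, etc.) are defined for a
commutative ring `R` via its total quotient field `FractionRing R`; in all theorems `R`
is assumed to be an integral domain, so `FractionRing R` is its quotient field `K`.
-/

noncomputable section

namespace TSharpPaper

variable (R : Type*) [CommRing R]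

variable {σ : Type*}

section Helpers

variable {R}

/-! ### `v`- and `t`-closures; primality of maximal `t`-ideals -/

theorem mem_one_div_idealSub {I : Ideal R} {y : FractionRing R} :
    y ∈ (1 : Submodule R (FractionRing R)) / idealSub R I ↔
      ∀ j ∈ I, y * algebraMap R (FractionRing R) j ∈ (1 : Submodule R (FractionRing R)) := by
  rw [Submodule.mem_div_iff_forall_mul_mem]
  constructor
  · intro h j hj
    exact h _ ⟨j, hj, rfl⟩
  · rintro h _ ⟨j, hj, rfl⟩
    exact h j hj

theorem mem_vIdeal_s2 {I : Ideal R} {x : R} :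
    x ∈ vIdeal R I ↔ ∀ y : FractionRing R,
      (∀ j ∈ I, y * algebraMap R (FractionRing R) j ∈ (1 : Submodule R (FractionRing R))) →
        algebraMap R (FractionRing R) x * y ∈ (1 : Submodule R (FractionRing R)) := by
  unfold vIdeal
  rw [Submodule.mem_comap, Submodule.mem_div_iff_forall_mul_mem]
  simp only [mem_one_div_idealSub, Algebra.linearMap_apply]

theorem isTIdeal_iff {I : Ideal R} :
    IsTIdeal R I ↔ I ≠ ⊥ ∧ ∀ J : Ideal R, J.FG → J ≠ ⊥ → J ≤ I → vIdeal R J ≤ I := by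
  unfold IsTIdeal
  refine and_congr_right fun _ => ?_
  constructor
  · intro h J h1 h2 h3
    conv_rhs => rw [← h]
    exact le_iSup₂_of_le J h1 (le_iSup₂_of_le h2 h3 le_rfl)
  · intro h
    apply le_antisymm
    · exact iSup₂_le fun J h1 => iSup₂_le fun h2 h3 => h J h1 h2 h3
    · intro x hx
      by_cases hx0 : x = 0
      · rw [hx0]
        exact Submodule.zero_mem _
      · have hle : vIdeal R (Ideal.span {x}) ≤ tIdeal R I :=
          le_iSup₂_of_le (Ideal.span {x}) (Submodule.fg_span_singleton x)
            (le_iSup₂_of_le (by simpa [Ideal.span_singleton_eq_bot] using hx0)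
              ((Ideal.span_singleton_le_iff_mem I).2 hx) le_rfl)
        exact hle (le_vIdeal _ (Ideal.mem_span_singleton_self x))

/-- Maximal `t`-ideals are prime: for `a ∉ M`, the ideal `(M :_R a)` is a proper `t`-ideal
containing `M`, hence equals `M`. -/
theorem isPrime_of_mem_tMax [IsDomain R] {M : Ideal R} (hM : M ∈ tMax R) : M.IsPrime := by
  obtain ⟨hMt, hMtop, hMmax⟩ := hM
  obtain ⟨hM0, hMv⟩ := isTIdeal_iff.1 hMt
  refine ⟨hMtop, fun {a b} hab => ?_⟩
  by_contra! hcon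
  obtain ⟨ha, hb⟩ := hcon
  have ha0 : a ≠ 0 := fun h => ha (h ▸ M.zero_mem)
  let C : Ideal R := Submodule.comap (LinearMap.mulLeft R a) M
  have hC : ∀ x, x ∈ C ↔ a * x ∈ M := fun _ => Iff.rfl
  have hMC : M ≤ C := fun x hx => M.mul_mem_left a hx
  have hCt : IsTIdeal R C := by
    refine isTIdeal_iff.2 ⟨fun h => hM0 (le_bot_iff.1 (h ▸ hMC)), fun F hF hF0 hFC x hx => ?_⟩
    rw [hC]
    have haF : (Submodule.map (LinearMap.mulLeft R a) F : Ideal R) ≤ M := by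
      rintro _ ⟨f, hf, rfl⟩
      exact hFC hf
    refine hMv _ (Submodule.FG.map (LinearMap.mulLeft R a) hF) ?_ haF ?_
    · obtain ⟨f, hf, hf0⟩ := Submodule.exists_mem_ne_zero_of_ne_bot hF0
      intro h
      have : a * f ∈ (Submodule.map (LinearMap.mulLeft R a) F : Ideal R) := ⟨f, hf, rfl⟩
      rw [h] at this
      exact mul_ne_zero ha0 hf0 this
    · rw [mem_vIdeal_s2] at hx ⊢
      intro y hy
      have := hx (y * algebraMap R _ a) fun j hj => by
        have := hy (a * j) ⟨j, hj, rfl⟩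
        rwa [map_mul, ← mul_assoc] at this
      rw [map_mul]
      convert this using 1
      ring
  have hC1 : C ≠ ⊤ := by
    intro h
    have : (1 : R) ∈ C := h ▸ Submodule.mem_top
    rw [hC, mul_one] at this
    exact ha this
  have := hMmax C hCt hC1 hMC
  exact hb (this ▸ (hC b).2 hab)

/-! ### Localizations and common denominators -/

theorem mem_locSet {P : Ideal R} {x : FractionRing R} :
    x ∈ locSet R P ↔
      ∃ s ∉ P, x * algebraMap R (FractionRing R) s ∈ (1 : Submodule R (FractionRing R)) := by
  constructor
  · rintro ⟨r, s, hs, h⟩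
    exact ⟨s, hs, Submodule.mem_one.2 ⟨r, h.symm⟩⟩
  · rintro ⟨s, hs, h⟩
    obtain ⟨r, hr⟩ := Submodule.mem_one.1 h
    exact ⟨r, s, hs, hr.symm⟩

theorem le_one_div_one_div (H : Submodule R (FractionRing R)) :
    H ≤ (1 : Submodule R (FractionRing R)) / (1 / H) := by
  intro h hh
  rw [Submodule.mem_div_iff_forall_mul_mem]
  intro y hy
  rw [mul_comm]
  exact Submodule.mem_div_iff_forall_mul_mem.1 hy h hh

/-- A finitely generated submodule of `K` contained in `R_P`, with `P` prime, has a common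
denominator outside `P`. -/
theorem exists_common_denom {P : Ideal R} (hP : P.IsPrime) {H : Submodule R (FractionRing R)}
    (hH : H.FG) (hHP : ∀ h ∈ H, h ∈ locSet R P) :
    ∃ s ∉ P, algebraMap R (FractionRing R) s ∈ (1 : Submodule R (FractionRing R)) / H := by
  induction H, hH using Submodule.fg_induction with
  | singleton x =>
    obtain ⟨s, hs, hxs⟩ := mem_locSet.1 (hHP x (Submodule.mem_span_singleton_self x))
    refine ⟨s, hs, Submodule.mem_div_iff_forall_mul_mem.2 fun y hy => ?_⟩
    obtain ⟨r, rfl⟩ := Submodule.mem_span_singleton.1 hy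
    rw [mul_smul_comm, mul_comm]
    exact Submodule.smul_mem _ r hxs
  | sup H₁ H₂ h₁ h₂ ih₁ ih₂ =>
    obtain ⟨s₁, hs₁, hd₁⟩ := ih₁ fun h hh => hHP h (Submodule.mem_sup_left hh)
    obtain ⟨s₂, hs₂, hd₂⟩ := ih₂ fun h hh => hHP h (Submodule.mem_sup_right hh)
    refine ⟨s₁ * s₂, fun h => (hP.mem_or_mem h).elim hs₁ hs₂,
      Submodule.mem_div_iff_forall_mul_mem.2 fun y hy => ?_⟩
    obtain ⟨y₁, hy₁, y₂, hy₂, rfl⟩ := Submodule.mem_sup.1 hy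
    rw [mul_add]
    refine Submodule.add_mem _ ?_ ?_
    · have := Submodule.smul_mem _ s₂ (Submodule.mem_div_iff_forall_mul_mem.1 hd₁ y₁ hy₁)
      rw [Algebra.smul_def] at this
      convert this using 1
      rw [map_mul]
      ring
    · have := Submodule.smul_mem _ s₁ (Submodule.mem_div_iff_forall_mul_mem.1 hd₂ y₂ hy₂)
      rw [Algebra.smul_def] at this
      convert this using 1
      rw [map_mul]
      ring

/-! ### Isolating finitely generated ideals and separating fractions -/

/-- A finitely generated ideal contained in `M` only yields an element of
`⋂_{N ≠ M} R_N` outside `R_M`; it is found in the inverse of the ideal. -/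
theorem exists_not_mem_locSet [IsDomain R] (hvc : IsVCoherent R) {M : Ideal R}
    (hM : M ∈ tMax R) {J : Ideal R} (hJ : J.FG) (hJM : J ≤ M)
    (hJu : ∀ N ∈ tMax R, J ≤ N → N = M) :
    ∃ x, x ∉ locSet R M ∧ ∀ N ∈ tMax R, N ≠ M → x ∈ locSet R N := by
  obtain ⟨hM0, hMv⟩ := isTIdeal_iff.1 hM.1
  -- If `J = 0`, then `M` is the only maximal `t`-ideal, and any nonzero principal ideal of `M`
  -- can replace `J`; enlarging `J` handles both cases at once.
  obtain ⟨c, hc, hc0⟩ := Submodule.exists_mem_ne_zero_of_ne_bot hM0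
  let J' : Ideal R := J ⊔ Ideal.span {c}
  have hcJ' : c ∈ J' := Submodule.mem_sup_right (Ideal.mem_span_singleton_self c)
  have hJ'fg : J'.FG := Submodule.FG.sup hJ (Submodule.fg_span_singleton c)
  have hJ'0 : J' ≠ ⊥ := fun h => hc0 (by rwa [h] at hcJ')
  have hJ'M : J' ≤ M := sup_le hJM ((Ideal.span_singleton_le_iff_mem M).2 hc)
  obtain ⟨H, hHfg, hH⟩ := hvc J' hJ'0 hJ'fg
  by_contra! hcon
  have hinv : ∀ y ∈ (1 : Submodule R (FractionRing R)) / idealSub R J', y ∈ locSet R M := by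
    intro y hy
    by_contra hyM
    obtain ⟨N, hN, hNM, hyN⟩ := hcon y hyM
    refine hNM (hJu N hN fun j hj => ?_)
    by_contra hjN
    exact hyN (mem_locSet.2 ⟨j, hjN, mem_one_div_idealSub.1 hy j (Submodule.mem_sup_left hj)⟩)
  obtain ⟨s, hs, hsH⟩ := exists_common_denom (isPrime_of_mem_tMax hM) hHfg
    fun h hh => hinv h (hH ▸ le_one_div_one_div H hh)
  refine hs (hMv J' hJ'fg hJ'0 hJ'M (mem_vIdeal_s2.2 fun y hy => ?_))
  have hy' := mem_one_div_idealSub.2 hy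
  rw [hH] at hy'
  rw [mul_comm]
  exact Submodule.mem_div_iff_forall_mul_mem.1 hy' _ hsH

/-- An element `u` of `⋂_{N ≠ M} R_N` outside `R_M` yields a finitely generated ideal
contained in `M` only: one whose `v`-closure contains the conductor of `u`. -/
theorem exists_fg_of_mem_locSet [IsDomain R] (hvc : IsVCoherent R) {M : Ideal R}
    {u : FractionRing R} (huM : u ∉ locSet R M)
    (hu : ∀ N ∈ tMax R, N ≠ M → u ∈ locSet R N) :
    ∃ J : Ideal R, J.FG ∧ J ≤ M ∧ ∀ N ∈ tMax R, J ≤ N → N = M := by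
  obtain ⟨a, b, hb, rfl⟩ := IsFractionRing.div_surjective (A := R) u
  have hb0 : b ≠ 0 := nonZeroDivisors.ne_zero hb
  have hbK : algebraMap R (FractionRing R) b ≠ 0 := by
    simpa using hb0
  have hIM : ∀ x : R, algebraMap R (FractionRing R) a / algebraMap R (FractionRing R) b *
      algebraMap R (FractionRing R) x ∈ (1 : Submodule R (FractionRing R)) → x ∈ M := by
    intro x hx
    by_contra hxM
    exact huM (mem_locSet.2 ⟨x, hxM, hx⟩)
  let I₀ : Ideal R := Ideal.span {a} ⊔ Ideal.span {b}
  have ha₀ : a ∈ I₀ := Submodule.mem_sup_left (Ideal.mem_span_singleton_self a)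
  have hb₀ : b ∈ I₀ := Submodule.mem_sup_right (Ideal.mem_span_singleton_self b)
  obtain ⟨H, hHfg, hH⟩ := hvc I₀ (fun h => hb0 (by rwa [h] at hb₀))
    ((Submodule.fg_span_singleton a).sup (Submodule.fg_span_singleton b))
  have hHinv : ∀ h ∈ H, h ∈ (1 : Submodule R (FractionRing R)) / idealSub R I₀ :=
    fun h hh => hH ▸ le_one_div_one_div H hh
  let L : Submodule R (FractionRing R) :=
    Submodule.map (LinearMap.mulLeft R (algebraMap R (FractionRing R) b)) H
  let J : Ideal R := Submodule.comap (Algebra.linearMap R (FractionRing R)) L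
  have hLR : L ≤ LinearMap.range (Algebra.linearMap R (FractionRing R)) := by
    rintro _ ⟨h, hh, rfl⟩
    obtain ⟨r, hr⟩ := Submodule.mem_one.1 (mem_one_div_idealSub.1 (hHinv h hh) b hb₀)
    exact ⟨r, by rw [LinearMap.mulLeft_apply, mul_comm]; exact hr⟩
  have hJfg : J.FG := by
    refine Submodule.fg_of_fg_map_injective (Algebra.linearMap R (FractionRing R))
      (IsFractionRing.injective R (FractionRing R)) ?_
    rw [Submodule.map_comap_eq_self hLR]
    exact hHfg.map _
  -- `b` lies in the conductor; adjoining it guarantees a nonzero ideal.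
  refine ⟨J ⊔ Ideal.span {b}, Submodule.FG.sup hJfg (Submodule.fg_span_singleton b), sup_le ?_ ?_, ?_⟩
  · rintro x ⟨h, hh, hx⟩
    apply hIM
    rw [LinearMap.mulLeft_apply, Algebra.linearMap_apply] at hx
    rw [← hx]
    convert mem_one_div_idealSub.1 (hHinv h hh) a ha₀ using 1
    field_simp
  · rw [Ideal.span_singleton_le_iff_mem]
    apply hIM
    rw [div_mul_cancel₀ _ hbK]
    exact Submodule.mem_one.2 ⟨a, rfl⟩
  · intro N hN hJN
    by_contra hNM
    obtain ⟨x, hxN, hx⟩ := mem_locSet.1 (hu N hN hNM)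
    obtain ⟨-, hNv⟩ := isTIdeal_iff.1 hN.1
    have hbJ : b ∈ J ⊔ Ideal.span {b} :=
      Submodule.mem_sup_right (Ideal.mem_span_singleton_self b)
    refine hxN (hNv _ (Submodule.FG.sup hJfg (Submodule.fg_span_singleton b))
      (fun h => hb0 (by rwa [h] at hbJ)) hJN (mem_vIdeal_s2.2 fun y hy => ?_))
    -- `x / b ∈ (a, b)⁻¹ = H_v` and `y b ∈ H⁻¹`, so their product `x y` lies in `R`.
    have hxb : algebraMap R (FractionRing R) x / algebraMap R (FractionRing R) b ∈
        (1 : Submodule R (FractionRing R)) / idealSub R I₀ := by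
      refine mem_one_div_idealSub.2 fun j hj => ?_
      obtain ⟨j₁, hj₁, j₂, hj₂, rfl⟩ := Submodule.mem_sup.1 hj
      obtain ⟨r₁, rfl⟩ := Ideal.mem_span_singleton'.1 hj₁
      obtain ⟨r₂, rfl⟩ := Ideal.mem_span_singleton'.1 hj₂
      have h₁ := Submodule.smul_mem _ r₁ hx
      have h₂ : algebraMap R (FractionRing R) (r₂ * x) ∈
        (1 : Submodule R (FractionRing R)) := Submodule.mem_one.2 ⟨_, rfl⟩
      rw [Algebra.smul_def] at h₁
      convert Submodule.add_mem _ h₁ h₂ using 1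
      simp only [map_add, map_mul]
      field_simp
    have hyb : y * algebraMap R (FractionRing R) b ∈
        (1 : Submodule R (FractionRing R)) / H := by
      refine Submodule.mem_div_iff_forall_mul_mem.2 fun h hh => ?_
      have hbh : algebraMap R (FractionRing R) b * h ∈ L := ⟨h, hh, rfl⟩
      obtain ⟨r, hr⟩ := hLR hbh
      have hrJ : r ∈ J := by
        change Algebra.linearMap R (FractionRing R) r ∈ L
        rwa [hr]
      have := hy r (Submodule.mem_sup_left hrJ)
      rw [Algebra.linearMap_apply] at hr
      rwa [hr, ← mul_assoc] at this
    rw [hH] at hxb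
    convert Submodule.mem_div_iff_forall_mul_mem.1 hxb _ hyb using 1
    field_simp

end Helpers

/-- **Theorem (1.5).**  A `v`-coherent integral domain `R` is a `t#`-domain if and only if
each maximal `t`-ideal of `R` contains a finitely generated ideal which is contained in no
other maximal `t`-ideal of `R`. -/
theorem tsharp_iff_fg_of_vCoherent (R : Type*) [CommRing R] [IsDomain R]
    (hvc : IsVCoherent R) :
    IsTSharp R ↔
      ∀ M ∈ tMax R, ∃ J : Ideal R, J.FG ∧ J ≤ M ∧ ∀ N ∈ tMax R, J ≤ N → N = M := by
  constructor
  · intro hsharp M hM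
    have hne := hsharp (tMax R) (tMax R \ {M}) subset_rfl Set.sdiff_subset fun h =>
      (h ▸ hM : M ∈ tMax R \ {M}).2 rfl
    have hsub : (⋂ N ∈ tMax R, locSet R N) ⊆ ⋂ N ∈ tMax R \ {M}, locSet R N :=
      Set.biInter_subset_biInter_left Set.sdiff_subset
    obtain ⟨u, hu, hu'⟩ := Set.exists_of_ssubset (hsub.ssubset_of_ne hne)
    rw [Set.mem_iInter₂] at hu hu'
    refine exists_fg_of_mem_locSet hvc (u := u) (fun huM => hu' fun N hN => ?_)
      fun N hN hNM => hu N ⟨hN, hNM⟩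
    by_cases hNM : N = M
    · exact hNM ▸ huM
    · exact hu N ⟨hN, hNM⟩
  · intro h
    have key : ∀ 𝔐₁ 𝔐₂ : Set (Ideal R), 𝔐₁ ⊆ tMax R → 𝔐₂ ⊆ tMax R →
        (⋂ M ∈ 𝔐₁, locSet R M) = (⋂ M ∈ 𝔐₂, locSet R M) → 𝔐₁ ⊆ 𝔐₂ := by
      intro 𝔐₁ 𝔐₂ h₁ h₂ heq M hM
      by_contra hM₂
      obtain ⟨J, hJ, hJM, hJu⟩ := h M (h₁ hM)
      obtain ⟨x, hxM, hx⟩ := exists_not_mem_locSet hvc (h₁ hM) hJ hJM hJu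
      have hx₂ : x ∈ ⋂ M ∈ 𝔐₂, locSet R M :=
        Set.mem_iInter₂.2 fun N hN => hx N (h₂ hN) fun hNM => hM₂ (hNM ▸ hN)
      rw [← heq] at hx₂
      exact hxM (Set.mem_iInter₂.1 hx₂ M hM)
    intro 𝔐₁ 𝔐₂ h₁ h₂ hne heq
    exact hne ((key _ _ h₁ h₂ heq).antisymm (key _ _ h₂ h₁ heq.symm))

end TSharpPaper
end
end

section
/- Let R be a v-coherent integral domain. If Λ and Λ' are two sets of pairwise incomparable t-primes of R such that Φ(Λ) and Φ(Λ') are v-finite and R_{Φ(Λ)} = R_{Φ(Λ')}, then Λ = Λ'. -/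
/-!
The set `Φ(Λ)` determines `Λ`: a `t`-prime `P` fails to lie in `Φ(Λ)` exactly when it is
contained in a member of `Λ`, so incomparability recovers `Λ` from the family. It remains to
see that `R_{Φ(Λ)}` determines `Φ(Λ)`, which is `Phi_subset_of_RPhi_subset`. Shrink
`I ∈ Φ(Λ)` to a `v`-finite `J_v ∈ Φ(Λ)`, and write `J⁻¹ = H_v` with `H` finitely generated.
Then `H ⊆ R_{Φ(Λ)} = R_{Φ(Λ')}`, so for every `P ∈ Λ'` some `r ∉ P` satisfies `rH ⊆ R`, because
only finitely many generators have to be multiplied into `R`. Hence `r ∈ H⁻¹ = J_v ⊆ I`, and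
`I` is not contained in `P`.
-/

/-
Definitions following S. Gabelli, E. Houston, T. G. Lucas,
"The t#-property for integral domains".

All the star-operation notions (`v`, `t`, maximal `t`-ideals, etc.) are defined for a
commutative ring `R` via its total quotient field `FractionRing R`; in all theorems `R`
is assumed to be an integral domain, so `FractionRing R` is its quotient field `K`.
-/

noncomputable section

namespace TSharpPaper

variable (R : Type*) [CommRing R]

variable {σ : Type*}

lemma exists_common_denominator (R : Type*) [CommRing R]
    {Λ : Set (Ideal R)} {P : Ideal R} (hP : P.IsPrime) (hPΛ : P ∈ Λ)
    (s : Finset (FractionRing R)) (hs : ∀ h ∈ s, h ∈ RPhi R Λ) :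
    ∃ r : R, r ∉ P ∧ ∀ h ∈ s, h * algebraMap R (FractionRing R) r ∈ imageR R := by
  classical
  induction s using Finset.induction_on with
  | empty => exact ⟨1, fun h => hP.ne_top ((Ideal.eq_top_iff_one P).2 h), by simp⟩
  | insert a s _ ih =>
    obtain ⟨r, hrP, hr⟩ := ih fun h hh => hs h (Finset.mem_insert_of_mem hh)
    obtain ⟨I, hI, hIa⟩ := hs a (Finset.mem_insert_self a s)
    obtain ⟨b, hbI, hbP⟩ := SetLike.not_le_iff_exists.1 (hI.2 P hPΛ)
    refine ⟨r * b, fun h => (hP.mem_or_mem h).elim hrP hbP, fun h hh => ?_⟩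
    rcases Finset.mem_insert.1 hh with rfl | hh
    · obtain ⟨c, hc⟩ := hIa b hbI
      exact ⟨r * c, by rw [map_mul, map_mul, hc]; ring⟩
    · obtain ⟨c, hc⟩ := hr h hh
      exact ⟨c * b, by rw [map_mul, map_mul, hc]; ring⟩

/-- The definition of `v`-finiteness allows `J = 0` as a generating ideal. Then `J_v` is the
set of `a` with `aK ⊆ R`, which is nonzero only when `R` is a field. -/
lemma isUnit_of_mem_vIdeal_bot (R : Type*) [CommRing R] [IsDomain R] {a p : R}
    (ha : a ∈ vIdeal R ⊥) (ha0 : a ≠ 0) (hp0 : p ≠ 0) : IsUnit p := by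
  have hinj := IsFractionRing.injective R (FractionRing R)
  have ha' : algebraMap R (FractionRing R) a ≠ 0 := fun h => ha0 (hinj (by simpa using h))
  have hp' : algebraMap R (FractionRing R) p ≠ 0 := fun h => hp0 (hinj (by simpa using h))
  have key := Submodule.mem_div_iff_forall_mul_mem.1 ha
    ((algebraMap R (FractionRing R) a)⁻¹ * (algebraMap R (FractionRing R) p)⁻¹)
    (Submodule.mem_div_iff_forall_mul_mem.2 fun y hy => by
      have : y = 0 := by simpa [idealSub] using hy
      simp [this])
  obtain ⟨c, hc⟩ := Submodule.mem_one.1 key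
  refine IsUnit.of_mul_eq_one c (hinj ?_)
  rw [map_mul, hc, Algebra.linearMap_apply, map_one]
  field_simp

lemma Phi_subset_of_RPhi_subset (R : Type*) [CommRing R] [IsDomain R] (hvc : IsVCoherent R)
    (Λ Λ' : Set (Ideal R)) (hΛ' : IncompTPrimes R Λ') (hf : PhiVFinite R Λ)
    (hsub : RPhi R Λ ⊆ RPhi R Λ') : Phi R Λ ⊆ Phi R Λ' := by
  intro I hI
  refine ⟨hI.1, fun P hP hIP => ?_⟩
  obtain ⟨J, hJ, hJI, J₀, hfg, rfl⟩ := hf I hI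
  have hprime := (hΛ'.1 P hP).1
  by_cases h0 : J₀ = ⊥
  · subst h0
    obtain ⟨a, ha, ha0⟩ := Submodule.exists_mem_ne_zero_of_ne_bot hJ.1.1
    obtain ⟨p, hp, hp0⟩ := Submodule.exists_mem_ne_zero_of_ne_bot (hΛ'.1 P hP).2.1
    exact hprime.ne_top (Ideal.eq_top_of_isUnit_mem P hp (isUnit_of_mem_vIdeal_bot R ha ha0 hp0))
  obtain ⟨H, ⟨s, rfl⟩, hH⟩ := hvc J₀ h0 hfg
  have hs : ∀ h ∈ s, h ∈ RPhi R Λ' := fun h hh => hsub ⟨_, hJ, fun a ha => by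
    -- `h ∈ H ⊆ H_v = J₀⁻¹`, while `a ∈ (J₀)_v`.
    have hmem : h ∈ (1 : Submodule R (FractionRing R)) / idealSub R J₀ := by
      rw [hH]
      refine Submodule.mem_div_iff_forall_mul_mem.2 fun y hy => ?_
      rw [mul_comm]
      exact Submodule.mem_div_iff_forall_mul_mem.1 hy h (Submodule.subset_span hh)
    have := Submodule.mem_div_iff_forall_mul_mem.1 ha h hmem
    rw [mul_comm]
    exact Submodule.mem_one.1 this⟩
  obtain ⟨r, hrP, hr⟩ := exists_common_denominator R hprime hP s hs
  have hrH : algebraMap R (FractionRing R) r ∈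
      (1 : Submodule R (FractionRing R)) / Submodule.span R (s : Set (FractionRing R)) := by
    refine Submodule.mem_div_iff_forall_mul_mem.2 fun y hy => ?_
    induction hy using Submodule.span_induction with
    | mem x hx => rw [mul_comm]; exact Submodule.mem_one.2 (hr x hx)
    | zero => simp
    | add x y _ _ hx hy => rw [mul_add]; exact add_mem hx hy
    | smul c x _ hx => rw [mul_smul_comm]; exact Submodule.smul_mem _ c hx
  refine hrP (hIP (hJI ?_))
  change algebraMap R (FractionRing R) r ∈
    (1 : Submodule R (FractionRing R)) / (1 / idealSub R J₀)
  rw [hH]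
  refine Submodule.mem_div_iff_forall_mul_mem.2 fun y hy => ?_
  rw [mul_comm]
  exact Submodule.mem_div_iff_forall_mul_mem.1 hy _ hrH

lemma subset_of_Phi_eq (R : Type*) [CommRing R]
    (Λ Λ' : Set (Ideal R)) (hΛ : IncompTPrimes R Λ) (hΛ' : IncompTPrimes R Λ')
    (h : Phi R Λ = Phi R Λ') : Λ ⊆ Λ' := by
  have aux : ∀ Λ₁ Λ₂ : Set (Ideal R), IncompTPrimes R Λ₁ → Phi R Λ₁ = Phi R Λ₂ →
      ∀ P ∈ Λ₁, ∃ Q ∈ Λ₂, P ≤ Q := by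
    intro Λ₁ Λ₂ h₁ he P hP
    by_contra! hcon
    have hmem : P ∈ Phi R Λ₁ := he ▸ ⟨(h₁.1 P hP).2, hcon⟩
    exact hmem.2 P hP le_rfl
  intro P hP
  obtain ⟨Q, hQ, hPQ⟩ := aux Λ Λ' hΛ h P hP
  obtain ⟨P', hP', hQP'⟩ := aux Λ' Λ hΛ' h.symm Q hQ
  have hPP' := hΛ.2 P hP P' hP' (hPQ.trans hQP')
  exact le_antisymm hPQ (hPP' ▸ hQP') ▸ hQ

/-- **Proposition (2.2).**  Let `R` be a `v`-coherent integral domain.  If `Λ` and `Λ'`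
are two sets of pairwise incomparable `t`-primes of `R` such that `Φ(Λ)` and `Φ(Λ')` are
`v`-finite and `R_{Φ(Λ)} = R_{Φ(Λ')}`, then `Λ = Λ'`. -/
theorem eq_of_RPhi_eq (R : Type*) [CommRing R] [IsDomain R] (hvc : IsVCoherent R)
    (Λ Λ' : Set (Ideal R)) (hΛ : IncompTPrimes R Λ) (hΛ' : IncompTPrimes R Λ')
    (hf : PhiVFinite R Λ) (hf' : PhiVFinite R Λ')
    (heq : RPhi R Λ = RPhi R Λ') : Λ = Λ' := by
  have hPhi : Phi R Λ = Phi R Λ' :=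
    (Phi_subset_of_RPhi_subset R hvc Λ Λ' hΛ' hf heq.le).antisymm
      (Phi_subset_of_RPhi_subset R hvc Λ' Λ hΛ hf' heq.ge)
  exact (subset_of_Phi_eq R Λ Λ' hΛ hΛ' hPhi).antisymm
    (subset_of_Phi_eq R Λ' Λ hΛ' hΛ hPhi.symm)

end TSharpPaper
end
end
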